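/- arXiv:1108.5903 — 4 statements merged into one kernel-verified Lean document; each statement's English description precedes it below -/
import Mathlib

section
/- Let m ≥ 0, let π, A, B be groups, and let φ : π → A and ψ : π → B be group homomorphisms such that the induced homomorphisms π/π^{(m+1)} → A/A^{(m+1)} and π/π^{(m+1)} → B/B^{(m+1)} are isomorphisms. Let G = A *_π B be the amalgamated free product (pushout) of φ and ψ. Then the homomorphism π/π^{(m+1)} → G/G^{(m+1)} induced by the canonical map π → G (given by ι_A ∘ φ = ι_B ∘ ψ) is an isomorphism. -/
universe u

attribute [local instance] derivedSeries_normal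

/-- The homomorphism between the quotients by the `n`-th terms of the derived series
induced by a group homomorphism. -/
def derivedQuotientMap {G H : Type u} [Group G] [Group H] (f : G →* H) (n : ℕ) :
    G ⧸ derivedSeries G n →* H ⧸ derivedSeries H n :=
  QuotientGroup.map _ _ f
    (Subgroup.map_le_iff_le_comap.mp (map_derivedSeries_le_derivedSeries f n))

/-! The functor `X ↦ X / X^{(n)}` is a reflection onto the groups whose `n`-th derived subgroup is
trivial, so it preserves pushouts, and the pushout of two isomorphisms consists of isomorphisms.

Concretely, with `n = m + 1`, the maps `A → A/A^{(n)} ≅ π/π^{(n)}` and `B → B/B^{(n)} ≅ π/π^{(n)}`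
agree on `π`, so they glue to a map `h : G → π/π^{(n)}` restricting to the projection on `π`.
Since `(π/π^{(n)})^{(n)}` is trivial (`derivedSeries_derivedQuotient_eq_bot`), `h` kills `G^{(n)}`,
which gives injectivity. Composing `h` with `π/π^{(n)} → G/G^{(n)}` gives the projection
`G → G/G^{(n)}`, by the uniqueness part of the universal property, which gives surjectivity. -/

theorem derivedSeries_derivedQuotient_eq_bot (G : Type u) [Group G] (n : ℕ) :
    derivedSeries (G ⧸ derivedSeries G n) n = ⊥ := by
  rw [← map_derivedSeries_eq (QuotientGroup.mk'_surjective (derivedSeries G n)) n,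
    QuotientGroup.map_mk'_self]

/-- If `φ : π → A` and `ψ : π → B` induce isomorphisms on the quotients by the `(m+1)`-st
derived subgroups, and `G` is the pushout (amalgamated free product) of `φ` and `ψ`, then the
canonical map `π → G` induces an isomorphism `π/π^{(m+1)} → G/G^{(m+1)}`. -/
theorem derivedQuotient_iso_of_amalgam (m : ℕ)
    (π A B G : Type u) [Group π] [Group A] [Group B] [Group G]
    (φ : π →* A) (ψ : π →* B) (ιA : A →* G) (ιB : B →* G)
    (hcomm : ιA.comp φ = ιB.comp ψ)
    (hpushout : ∀ (H : Type u) [Group H] (f : A →* H) (g : B →* H),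
      f.comp φ = g.comp ψ → ∃! h : G →* H, h.comp ιA = f ∧ h.comp ιB = g)
    (hφ : Function.Bijective (derivedQuotientMap φ (m + 1)))
    (hψ : Function.Bijective (derivedQuotientMap ψ (m + 1))) :
    Function.Bijective (derivedQuotientMap (ιA.comp φ) (m + 1)) := by
  let eA := MulEquiv.ofBijective _ hφ
  let eB := MulEquiv.ofBijective _ hψ
  let f : A →* π ⧸ derivedSeries π (m + 1) := eA.symm.toMonoidHom.comp (QuotientGroup.mk' _)
  let g : B →* π ⧸ derivedSeries π (m + 1) := eB.symm.toMonoidHom.comp (QuotientGroup.mk' _)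
  have hf (x : π) : f (φ x) = QuotientGroup.mk x := eA.symm_apply_eq.mpr rfl
  have hg (x : π) : g (ψ x) = QuotientGroup.mk x := eB.symm_apply_eq.mpr rfl
  obtain ⟨h, ⟨hA, hB⟩, -⟩ := hpushout _ f g (MonoidHom.ext fun x => (hf x).trans (hg x).symm)
  constructor
  · rw [injective_iff_map_eq_one]
    intro x hx
    induction x using QuotientGroup.induction_on with
    | H c =>
      have hc : ιA (φ c) ∈ derivedSeries G (m + 1) := (QuotientGroup.eq_one_iff _).mp hx
      have h1 := map_derivedSeries_le_derivedSeries h (m + 1) (Subgroup.mem_map_of_mem h hc)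
      rw [derivedSeries_derivedQuotient_eq_bot, Subgroup.mem_bot] at h1
      rw [← hf c, ← hA]
      exact h1
  · have key : (derivedQuotientMap (ιA.comp φ) (m + 1)).comp h = QuotientGroup.mk' _ := by
      -- Functoriality of the induced map, for both factorizations of `π → G`.
      have compA (x : π ⧸ derivedSeries π (m + 1)) :
          derivedQuotientMap (ιA.comp φ) (m + 1) x = derivedQuotientMap ιA (m + 1) (eA x) := by
        induction x using QuotientGroup.induction_on with
        | H c => rfl
      have compB (x : π ⧸ derivedSeries π (m + 1)) :
          derivedQuotientMap (ιA.comp φ) (m + 1) x = derivedQuotientMap ιB (m + 1) (eB x) := by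
        rw [hcomm]
        induction x using QuotientGroup.induction_on with
        | H c => rfl
      refine (hpushout _ ((QuotientGroup.mk' _).comp ιA) ((QuotientGroup.mk' _).comp ιB) ?_).unique
        ⟨?_, ?_⟩ ⟨rfl, rfl⟩
      · rw [MonoidHom.comp_assoc, hcomm, MonoidHom.comp_assoc]
      · rw [MonoidHom.comp_assoc, hA]
        ext a
        exact (compA _).trans (congrArg _ (eA.apply_symm_apply _))
      · rw [MonoidHom.comp_assoc, hB]
        ext b
        exact (compB _).trans (congrArg _ (eB.apply_symm_apply _))
    intro y
    obtain ⟨z, rfl⟩ := QuotientGroup.mk'_surjective _ y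
    exact ⟨h z, DFunLike.congr_fun key z⟩
end

section
/- Let m ≥ 0, let π, A, B be groups, and let φ : π → A and ψ : π → B be group homomorphisms such that the induced homomorphisms π/π^{(m+1)} → A/A^{(m+1)} and π/π^{(m+1)} → B/B^{(m+1)} are isomorphisms. Let G = A *_π B be the amalgamated free product (pushout) of φ and ψ with canonical maps ι_A : A → G and ι_B : B → G, and let Π be the normal closure in G of the set ι_A(A^{(m+1)}) ∪ ι_B(B^{(m+1)}). Then the canonical map π → G induces an isomorphism π/π^{(m+1)} → G/Π. -/
/-!
The inverse of `π/π^{(m+1)} → G/Π` comes from the universal property of the pushout. Inverting the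
given isomorphisms yields maps `f : A → A/A^{(m+1)} ≅ π/π^{(m+1)}` and
`g : B → B/B^{(m+1)} ≅ π/π^{(m+1)}` which both restrict to the projection on `π`, hence glue to
`h : G → π/π^{(m+1)}`. This `h` kills `Π`, and the induced map on `G/Π` is a left inverse, which
gives injectivity. Composing `h` with `π/π^{(m+1)} → G/Π` gives the projection `G → G/Π`, since
the two agree on `A` and `B`; this gives surjectivity.
-/

universe u

attribute [local instance] derivedSeries_normal

/-- The normal closure `Π` in `G` of `ιA(A^{(m+1)}) ∪ ιB(B^{(m+1)})`. -/
def amalgamDerivedClosure {A B G : Type u} [Group A] [Group B] [Group G]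
    (ιA : A →* G) (ιB : B →* G) (m : ℕ) : Subgroup G :=
  Subgroup.normalClosure
    ((ιA '' (derivedSeries A (m + 1) : Set A)) ∪ (ιB '' (derivedSeries B (m + 1) : Set B)))

instance {A B G : Type u} [Group A] [Group B] [Group G]
    (ιA : A →* G) (ιB : B →* G) (m : ℕ) : (amalgamDerivedClosure ιA ιB m).Normal :=
  Subgroup.normalClosure_normal

/-- The homomorphism `π/π^{(m+1)} → G/Π` induced by the canonical map `π → G` (taken to be
`ιA ∘ φ`). -/
def inducedToAmalgamQuotient {π A B G : Type u} [Group π] [Group A] [Group B] [Group G]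
    (φ : π →* A) (ιA : A →* G) (ιB : B →* G) (m : ℕ) :
    π ⧸ derivedSeries π (m + 1) →* G ⧸ amalgamDerivedClosure ιA ιB m :=
  QuotientGroup.map _ _ (ιA.comp φ) (by
    intro x hx
    refine Subgroup.subset_normalClosure (Or.inl ⟨φ x, ?_, rfl⟩)
    exact map_derivedSeries_le_derivedSeries φ (m + 1) ⟨x, hx, rfl⟩)

/-- If `φ : π → A` and `ψ : π → B` induce isomorphisms on the quotients by the `(m+1)`-st
derived subgroups, and `G` is the pushout (amalgamated free product) of `φ` and `ψ`, and `Π`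
is the normal closure in `G` of `ιA(A^{(m+1)}) ∪ ιB(B^{(m+1)})`, then the canonical map
`π → G` induces an isomorphism `π/π^{(m+1)} → G/Π`. -/
theorem inducedToAmalgamQuotient_bijective (m : ℕ)
    (π A B G : Type u) [Group π] [Group A] [Group B] [Group G]
    (φ : π →* A) (ψ : π →* B) (ιA : A →* G) (ιB : B →* G)
    (hcomm : ιA.comp φ = ιB.comp ψ)
    (hpushout : ∀ (H : Type u) [Group H] (f : A →* H) (g : B →* H),
      f.comp φ = g.comp ψ → ∃! h : G →* H, h.comp ιA = f ∧ h.comp ιB = g)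
    (hφ : Function.Bijective (derivedQuotientMap φ (m + 1)))
    (hψ : Function.Bijective (derivedQuotientMap ψ (m + 1))) :
    Function.Bijective (inducedToAmalgamQuotient φ ιA ιB m) := by
  let eφ := MulEquiv.ofBijective _ hφ
  let eψ := MulEquiv.ofBijective _ hψ
  let f : A →* π ⧸ derivedSeries π (m + 1) := eφ.symm.toMonoidHom.comp (QuotientGroup.mk' _)
  let g : B →* π ⧸ derivedSeries π (m + 1) := eψ.symm.toMonoidHom.comp (QuotientGroup.mk' _)
  have hf (x : π) : f (φ x) = (x : π ⧸ derivedSeries π (m + 1)) :=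
    eφ.symm_apply_apply (x : π ⧸ derivedSeries π (m + 1))
  have hg (x : π) : g (ψ x) = (x : π ⧸ derivedSeries π (m + 1)) :=
    eψ.symm_apply_apply (x : π ⧸ derivedSeries π (m + 1))
  obtain ⟨h, ⟨hA, hB⟩, -⟩ := hpushout _ f g (by ext x; exact (hf x).trans (hg x).symm)
  have hA' (a : A) : h (ιA a) = f a := DFunLike.congr_fun hA a
  have hB' (b : B) : h (ιB b) = g b := DFunLike.congr_fun hB b
  have hker : amalgamDerivedClosure ιA ιB m ≤ h.ker := by
    refine Subgroup.normalClosure_le_normal ?_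
    rintro _ (⟨a, ha, rfl⟩ | ⟨b, hb, rfl⟩)
    · refine (hA' a).trans ?_
      change eφ.symm (a : A ⧸ derivedSeries A (m + 1)) = 1
      rw [(QuotientGroup.eq_one_iff a).2 ha, map_one]
    · refine (hB' b).trans ?_
      change eψ.symm (b : B ⧸ derivedSeries B (m + 1)) = 1
      rw [(QuotientGroup.eq_one_iff b).2 hb, map_one]
  constructor
  · refine Function.LeftInverse.injective (g := QuotientGroup.lift _ h hker) fun q => ?_
    obtain ⟨x, rfl⟩ := QuotientGroup.mk_surjective q
    exact (hA' (φ x)).trans (hf x)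
  · have hfac (a : A) : inducedToAmalgamQuotient φ ιA ιB m (f a) =
        (ιA a : G ⧸ amalgamDerivedClosure ιA ιB m) := by
      obtain ⟨x, hx⟩ := QuotientGroup.mk_surjective (f a)
      have hxa : (φ x : A ⧸ derivedSeries A (m + 1)) = a :=
        (congrArg eφ hx).trans (eφ.apply_symm_apply _)
      rw [← hx]
      refine QuotientGroup.eq.2 (Subgroup.subset_normalClosure
        (Or.inl ⟨(φ x)⁻¹ * a, QuotientGroup.eq.1 hxa, ?_⟩))
      simp
    have hgac (b : B) : inducedToAmalgamQuotient φ ιA ιB m (g b) =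
        (ιB b : G ⧸ amalgamDerivedClosure ιA ιB m) := by
      obtain ⟨x, hx⟩ := QuotientGroup.mk_surjective (g b)
      have hxb : (ψ x : B ⧸ derivedSeries B (m + 1)) = b :=
        (congrArg eψ hx).trans (eψ.apply_symm_apply _)
      have hx' : ιA (φ x) = ιB (ψ x) := DFunLike.congr_fun hcomm x
      rw [← hx]
      refine QuotientGroup.eq.2 (Subgroup.subset_normalClosure
        (Or.inr ⟨(ψ x)⁻¹ * b, QuotientGroup.eq.1 hxb, ?_⟩))
      simp [hx']
    -- Both `G → π/π^{(m+1)} → G/Π` and the projection `G → G/Π` restrict to the projections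
    -- on `A` and `B`, so they agree by the uniqueness part of the universal property.
    have huniq : (inducedToAmalgamQuotient φ ιA ιB m).comp h =
        QuotientGroup.mk' (amalgamDerivedClosure ιA ιB m) := by
      refine (hpushout _ ((QuotientGroup.mk' _).comp ιA) ((QuotientGroup.mk' _).comp ιB)
        (by rw [MonoidHom.comp_assoc, hcomm, MonoidHom.comp_assoc])).unique
        ⟨?_, ?_⟩ ⟨rfl, rfl⟩
      · ext a
        exact (congrArg _ (hA' a)).trans (hfac a)
      · ext b
        exact (congrArg _ (hB' b)).trans (hgac b)
    intro q
    obtain ⟨y, rfl⟩ := QuotientGroup.mk_surjective q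
    exact ⟨h y, DFunLike.congr_fun huniq y⟩
end

section
/- Let F be a free group and let m ≥ 0. Then the quotient group F/F^{(m)} is bi-orderable: it admits a linear (total) order ≤ such that x ≤ y implies a·x·b ≤ a·y·b for all a, b, x, y. -/
/-!
The proof is by induction on `m`, through the Magnus embedding. Let `R` be a normal subgroup of the
free group `F` on `α` such that `G = F/R` is bi-ordered. The group `G` acts on the free abelian
group `M = ℤ^(G × α)` by left translation of the first coordinate, and sending a generator `x` to
the basis vector `(1, x)` paired with `xR` defines a homomorphism `F → M ⋊ G` (`magnus`).

* The kernel of `magnus` is `⁅R, R⁆` (`ker_magnus`). The `M`-component of a word counts, with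
  signs, the edges of the Cayley graph of `G` crossed by the path that the word describes. A section
  `s : G → F` assigns to the edge `(g, x)` the class of `s(g) x s(gx)⁻¹` in `R/⁅R, R⁆`, and
  the class of `s(h) w s(hw)⁻¹` is the sum of those of the edges of the path of `w` from `h`
  (`edgeHom_magnus`). If `w ∈ R` and the edge count vanishes, then a conjugate of `w` is in
  `⁅R, R⁆`.
* The semidirect product is bi-orderable: `M` has a translation-invariant and `G`-invariant order,
  comparing the coefficients at the least index of `G × α` where two vectors differ
  (`exists_finsupp_order`), and `M ⋊ G` is then ordered lexicographically, `G` first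
  (`biOrderable_semidirect`).

Hence `F/⁅R, R⁆` embeds in a bi-orderable group.
-/

universe u

attribute [local instance] derivedSeries_normal

/-- The group `G` admits a total order invariant under left and right multiplication. -/
def BiOrderable (G : Type*) [Group G] : Prop :=
  ∃ lo : LinearOrder G, ∀ a b x y : G, lo.le x y → lo.le (a * x * b) (a * y * b)

theorem BiOrderable.of_injective {G H : Type*} [Group G] [Group H] (f : G →* H)
    (hf : Function.Injective f) (h : BiOrderable H) : BiOrderable G := by
  obtain ⟨lo, hlo⟩ := h
  refine ⟨LinearOrder.lift' f hf, fun a b x y hxy => ?_⟩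
  change f (a * x * b) ≤ f (a * y * b)
  simp only [map_mul]
  exact hlo _ _ _ _ hxy

theorem biOrderable_semidirect {N G : Type*} [Group N] [Group G] (φ : G →* MulAut N)
    (hG : BiOrderable G) (lo : LinearOrder N)
    (hN : ∀ a b x y : N, lo.le x y → lo.le (a * x * b) (a * y * b))
    (hφ : ∀ g x y, lo.le x y → lo.le (φ g x) (φ g y)) : BiOrderable (N ⋊[φ] G) := by
  obtain ⟨loG, hG⟩ := hG
  have hGlt : ∀ a b x y : G, x < y → a * x * b < a * y * b := by
    intro a b x y h
    refine lt_of_le_of_ne (hG _ _ _ _ h.le) fun he => h.ne ?_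
    simpa using he
  refine ⟨LinearOrder.lift' (fun s : N ⋊[φ] G => toLex (s.right, s.left)) ?_, ?_⟩
  · intro s t h
    have h' := toLex.injective h
    simp only [Prod.mk.injEq] at h'
    exact SemidirectProduct.ext h'.2 h'.1
  · intro a b x y h
    change toLex (x.right, x.left) ≤ toLex (y.right, y.left) at h
    change toLex ((a * x * b).right, (a * x * b).left) ≤
      toLex ((a * y * b).right, (a * y * b).left)
    rw [Prod.Lex.toLex_le_toLex] at h ⊢
    simp only [SemidirectProduct.mul_left, SemidirectProduct.mul_right] at h ⊢
    rcases h with h | ⟨h, h'⟩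
    · exact Or.inl (hGlt _ _ _ _ h)
    · refine Or.inr ⟨by rw [h], ?_⟩
      rw [h]
      exact hN _ _ _ _ (hφ _ _ _ h')

/-- The action on `ℤ^(I)`, written multiplicatively, induced by permutations of the basis `I`. -/
noncomputable def finsuppAction {G I : Type*} [Group G] (σ : G →* Equiv.Perm I) :
    G →* MulAut (Multiplicative (I →₀ ℤ)) where
  toFun g := AddEquiv.toMultiplicative (Finsupp.domCongr (σ g))
  map_one' := by
    refine MulEquiv.ext fun x => ?_
    apply Multiplicative.toAdd.injective
    refine Finsupp.ext fun i => ?_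
    simp [Equiv.Perm.one_def]
  map_mul' g h := by
    refine MulEquiv.ext fun x => ?_
    apply Multiplicative.toAdd.injective
    refine Finsupp.ext fun i => ?_
    simp [Finsupp.equivMapDomain_apply, Equiv.Perm.mul_def]

theorem toAdd_finsuppAction {G I : Type*} [Group G] (σ : G →* Equiv.Perm I) (g : G)
    (x : Multiplicative (I →₀ ℤ)) (i : I) :
    (finsuppAction σ g x).toAdd i = x.toAdd ((σ g).symm i) := by
  simp [finsuppAction, Finsupp.equivMapDomain_apply]

/-- The order compares coefficients at the least index of difference, so it is preserved by
order-preserving permutations of the basis. -/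
theorem exists_finsupp_order {G I : Type*} [Group G] [LinearOrder I] (σ : G →* Equiv.Perm I)
    (hσ : ∀ g i j, i < j → σ g i < σ g j) :
    ∃ lo : LinearOrder (Multiplicative (I →₀ ℤ)),
      (∀ a b x y, lo.le x y → lo.le (a * x * b) (a * y * b)) ∧
      ∀ g x y, lo.le x y → lo.le (finsuppAction σ g x) (finsuppAction σ g y) := by
  let e : Multiplicative (I →₀ ℤ) → Lex (I →₀ ℤ) := fun x => toLex x.toAdd
  have he : Function.Injective e := fun x y h =>
    Multiplicative.toAdd.injective (toLex.injective h)
  refine ⟨LinearOrder.lift' e he, ?_, ?_⟩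
  · intro a b x y h
    change e x ≤ e y at h
    change e a + e x + e b ≤ e a + e y + e b
    gcongr
  · intro g x y h
    change e x ≤ e y at h
    change e _ ≤ e _
    rcases h.eq_or_lt with h | h
    · rw [he h]
    · refine le_of_lt ?_
      rw [Finsupp.Lex.lt_iff] at h ⊢
      obtain ⟨i, hi, hlt⟩ := h
      refine ⟨σ g i, fun j hj => ?_, ?_⟩
      · change (finsuppAction σ g x).toAdd j = (finsuppAction σ g y).toAdd j
        rw [toAdd_finsuppAction, toAdd_finsuppAction]
        refine hi _ ?_
        have := hσ g⁻¹ _ _ hj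
        simpa [map_inv] using this
      · change (finsuppAction σ g x).toAdd (σ g i) < (finsuppAction σ g y).toAdd (σ g i)
        rw [toAdd_finsuppAction, toAdd_finsuppAction]
        rw [Equiv.symm_apply_apply]
        exact hlt

/-- Left translation of the first coordinate of `G × α`: the action of `G` on the edges of its
Cayley graph with respect to generators labelled by `α`. -/
def edgePerm (G α : Type*) [Group G] : G →* Equiv.Perm (G × α) where
  toFun g := (Equiv.mulLeft g).prodCongr (Equiv.refl α)
  map_one' := by ext p <;> simp
  map_mul' g h := by ext p <;> simp [mul_assoc]

@[simp]
theorem edgePerm_apply {G α : Type*} [Group G] (g : G) (p : G × α) :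
    edgePerm G α g p = (g * p.1, p.2) := rfl

/-- The semidirect product `ℤ^(G × α) ⋊ G`, target of the Magnus embedding. -/
abbrev MagnusGroup (G α : Type*) [Group G] : Type _ :=
  Multiplicative ((G × α) →₀ ℤ) ⋊[finsuppAction (edgePerm G α)] G

theorem biOrderable_magnusGroup {G α : Type*} [Group G] (hG : BiOrderable G) :
    BiOrderable (MagnusGroup G α) := by
  classical
  obtain ⟨loG, h⟩ := id hG
  let : LinearOrder α := linearOrderOfSTO WellOrderingRel
  let lo : LinearOrder (G × α) :=
    LinearOrder.lift' (fun p : G × α => toLex p) toLex.injective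
  obtain ⟨loN, h₁, h₂⟩ := @exists_finsupp_order G (G × α) _ lo (edgePerm G α) (by
    intro g i j hij
    change toLex i < toLex j at hij
    change toLex (g * i.1, i.2) < toLex (g * j.1, j.2)
    rw [Prod.Lex.toLex_lt_toLex] at hij ⊢
    rcases hij with hij | ⟨hij, hij'⟩
    · refine Or.inl (lt_of_le_of_ne ?_ ?_)
      · simpa using h g 1 _ _ hij.le
      · simpa using hij.ne
    · exact Or.inr ⟨by simp [hij], hij'⟩)
  exact biOrderable_semidirect _ hG loN h₁ h₂

section Magnus

variable {α : Type*} (R : Subgroup (FreeGroup α)) [R.Normal]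

/-- The Magnus homomorphism: `x ↦ ((1, x), xR)` on generators. Its first component is the vector of
Fox derivatives of a word, read in `ℤ[F/R]`. -/
noncomputable def magnus : FreeGroup α →* MagnusGroup (FreeGroup α ⧸ R) α :=
  FreeGroup.lift fun x =>
    ⟨Multiplicative.ofAdd (Finsupp.single (1, x) 1), QuotientGroup.mk (FreeGroup.of x)⟩

theorem magnus_right (w : FreeGroup α) : (magnus R w).right = QuotientGroup.mk w := by
  have : SemidirectProduct.rightHom.comp (magnus R) = QuotientGroup.mk' R := by
    ext x
    simp [magnus]
  exact DFunLike.congr_fun this w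

/-- The element `s(h) w s(hw)⁻¹` of `R`, where `s` is the section `Quotient.out` of `F → F/R`. -/
noncomputable def loop (h : FreeGroup α ⧸ R) (w : FreeGroup α) : R :=
  ⟨h.out * w * (h * QuotientGroup.mk w : FreeGroup α ⧸ R).out⁻¹, by
    rw [← QuotientGroup.eq_one_iff]
    simp⟩

theorem loop_mul (h : FreeGroup α ⧸ R) (v w : FreeGroup α) :
    loop R h (v * w) = loop R h v * loop R (h * QuotientGroup.mk v) w := by
  apply Subtype.ext
  simp [loop, mul_assoc]

/-- The homomorphism `ℤ^(G × α) → R/⁅R, R⁆` sending the edge `(g, x)` to the class of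
`s(g) x s(gx)⁻¹`. -/
noncomputable def edgeHom :
    Multiplicative (((FreeGroup α ⧸ R) × α) →₀ ℤ) →* Abelianization R :=
  AddMonoidHom.toMultiplicativeLeft (Finsupp.liftAddHom fun p =>
    zmultiplesHom _ (Additive.ofMul (Abelianization.of (loop R p.1 (FreeGroup.of p.2)))))

theorem edgeHom_magnus (w : FreeGroup α) : ∀ h : FreeGroup α ⧸ R,
    edgeHom R (finsuppAction (edgePerm _ α) h (magnus R w).left) =
      Abelianization.of (loop R h w) := by
  have mul_left : ∀ (v w : FreeGroup α) (h : FreeGroup α ⧸ R),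
      edgeHom R (finsuppAction (edgePerm _ α) h (magnus R (v * w)).left) =
        edgeHom R (finsuppAction (edgePerm _ α) h (magnus R v).left) *
        edgeHom R (finsuppAction (edgePerm _ α) (h * QuotientGroup.mk v) (magnus R w).left) := by
    intro v w h
    rw [map_mul, SemidirectProduct.mul_left, map_mul, map_mul, magnus_right, map_mul]
    rfl
  have one : ∀ h : FreeGroup α ⧸ R,
      edgeHom R (finsuppAction (edgePerm _ α) h (magnus R 1).left) =
        Abelianization.of (loop R h 1) := by
    intro h
    have : loop R h 1 = 1 := by
      apply Subtype.ext
      simp [loop]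
    rw [this]
    simp
  induction w using FreeGroup.induction_on with
  | C1 => exact one
  | of x =>
    intro h
    rw [magnus, FreeGroup.lift_apply_of]
    simp [edgeHom, finsuppAction]
  | inv_of x ih =>
    intro h
    have h₁ := mul_left (FreeGroup.of x)⁻¹ (FreeGroup.of x) h
    rw [inv_mul_cancel, one, ih, ← inv_mul_cancel (FreeGroup.of x), loop_mul, map_mul] at h₁
    exact (mul_right_cancel h₁).symm
  | mul v w hv hw =>
    intro h
    rw [mul_left, hv, hw, loop_mul, map_mul]

theorem ker_magnus : (magnus R).ker = ⁅R, R⁆ := by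
  apply le_antisymm
  · intro w hw
    rw [MonoidHom.mem_ker] at hw
    have hR : (QuotientGroup.mk w : FreeGroup α ⧸ R) = 1 := by
      rw [← magnus_right, hw, SemidirectProduct.one_right]
    have h := edgeHom_magnus R w 1
    rw [hw, SemidirectProduct.one_left, map_one, map_one, eq_comm, ← MonoidHom.mem_ker,
      Abelianization.ker_of] at h
    have h' := Subgroup.mem_map_of_mem R.subtype h
    rw [Subgroup.map_subtype_commutator] at h'
    have hc : R.subtype (loop R 1 w) =
        (1 : FreeGroup α ⧸ R).out * w * (1 : FreeGroup α ⧸ R).out⁻¹ := by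
      simp [loop, hR]
    rw [hc] at h'
    simpa using (Subgroup.Normal.mem_comm_iff inferInstance).1 h'
  · rw [Subgroup.commutator_le]
    intro a ha b hb
    -- elements of `R` land in the abelian factor `ℤ^(G × α)`
    have key : ∀ r ∈ R, magnus R r = SemidirectProduct.inl (magnus R r).left := by
      intro r hr
      apply SemidirectProduct.ext
      · simp
      · rw [magnus_right, SemidirectProduct.right_inl]
        exact (QuotientGroup.eq_one_iff r).2 hr
    rw [MonoidHom.mem_ker, map_commutatorElement, key a ha, key b hb, ← map_commutatorElement,
      commutatorElement_eq_one_iff_mul_comm.2 (mul_comm _ _), map_one]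

theorem biOrderable_quotient_commutator (h : BiOrderable (FreeGroup α ⧸ R)) :
    BiOrderable (FreeGroup α ⧸ ⁅R, R⁆) := by
  refine BiOrderable.of_injective
    (QuotientGroup.lift ⁅R, R⁆ (magnus R) (ker_magnus R).ge) ?_
    (biOrderable_magnusGroup (α := α) h)
  rw [← MonoidHom.ker_eq_bot_iff, QuotientGroup.ker_lift, ker_magnus, QuotientGroup.map_mk'_self]

end Magnus

theorem biOrderable_quotient_derivedSeries (α : Type*) (m : ℕ) :
    BiOrderable (FreeGroup α ⧸ derivedSeries (FreeGroup α) m) := by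
  induction m with
  | zero =>
    have : Subsingleton (FreeGroup α ⧸ derivedSeries (FreeGroup α) 0) :=
      QuotientGroup.subsingleton_quotient_top
    exact BiOrderable.of_injective (1 : _ →* Multiplicative ℤ)
      (fun x y _ => Subsingleton.elim x y)
      ⟨inferInstance, fun a b x y h => by gcongr⟩
  | succ m ih => exact biOrderable_quotient_commutator _ ih

/-- For a free group `F` and `m ≥ 0`, the quotient `F/F^{(m)}` is bi-orderable: it admits a
linear (total) order `≤` such that `x ≤ y` implies `a·x·b ≤ a·y·b`. -/
theorem freeGroup_derivedQuotient_biorderable (α : Type u) (m : ℕ) :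
    ∃ le : (FreeGroup α ⧸ derivedSeries (FreeGroup α) m) →
        (FreeGroup α ⧸ derivedSeries (FreeGroup α) m) → Prop,
      IsLinearOrder (FreeGroup α ⧸ derivedSeries (FreeGroup α) m) le ∧
      ∀ a b x y : FreeGroup α ⧸ derivedSeries (FreeGroup α) m,
        le x y → le (a * x * b) (a * y * b) := by
  obtain ⟨lo, h⟩ := biOrderable_quotient_derivedSeries α m
  have hlin : IsLinearOrder (FreeGroup α ⧸ derivedSeries (FreeGroup α) m) lo.le :=
    { refl := lo.le_refl
      trans := lo.le_trans
      antisymm := lo.le_antisymm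
      total := lo.le_total }
  exact ⟨lo.le, hlin, h⟩
end

section
/- Let A be a free abelian group (on an arbitrary, possibly infinite, set of generators). Then the integral group ring ℤ[A] is an integral domain which is a unique factorization domain. -/
universe u

/-!
The ring `ℤ[⊕_ι ℤ]` of Laurent polynomials is the localization of the polynomial ring
`ℤ[⊕_ι ℕ] = ℤ[X_i : i ∈ ι]` at the submonoid of monomials: multiplying a Laurent polynomial by a
suitable monomial clears all negative exponents (`exists_mul_monomial`). Polynomial rings over `ℤ`
in arbitrarily many variables are factorial, and factoriality passes to localizations.
-/

/-- The inclusion `⊕_ι ℕ → ⊕_ι ℤ` of exponents. -/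
noncomputable def expIncl (ι : Type u) : (ι →₀ ℕ) →+ (ι →₀ ℤ) :=
  Finsupp.mapRange.addMonoidHom (Nat.castAddMonoidHom ℤ)

theorem expIncl_injective (ι : Type u) : Function.Injective (expIncl ι) :=
  Finsupp.mapRange_injective _ (map_zero _) Nat.cast_injective

/-- The inclusion of the polynomial ring, written as `ℤ[⊕_ι ℕ]`, in the Laurent polynomial
ring. -/
noncomputable def polyIncl (ι : Type u) :
    AddMonoidAlgebra ℤ (ι →₀ ℕ) →+* AddMonoidAlgebra ℤ (ι →₀ ℤ) :=
  AddMonoidAlgebra.mapDomainRingHom ℤ (expIncl ι)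

theorem polyIncl_single {ι : Type u} (a : ι →₀ ℕ) (r : ℤ) :
    polyIncl ι (AddMonoidAlgebra.single a r) = AddMonoidAlgebra.single (expIncl ι a) r := by
  simp [polyIncl]

theorem polyIncl_injective (ι : Type u) : Function.Injective (polyIncl ι) :=
  AddMonoidAlgebra.mapDomain_injective (expIncl_injective ι)

/-- Every exponent vector is a difference of two nonnegative ones, namely its positive and
negative parts. -/
theorem exists_add_expIncl {ι : Type u} (a : ι →₀ ℤ) :
    ∃ b c : ι →₀ ℕ, a + expIncl ι b = expIncl ι c := by
  refine ⟨a.mapRange (fun n => (-n).toNat) (by simp), a.mapRange Int.toNat (by simp), ?_⟩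
  ext i
  simp only [expIncl, Finsupp.mapRange.addMonoidHom_apply, Finsupp.add_apply,
    Finsupp.mapRange_apply, Nat.coe_castAddMonoidHom]
  omega

/-- Some monomial clears all negative exponents of a given Laurent polynomial. -/
theorem exists_mul_monomial {ι : Type u} (x : AddMonoidAlgebra ℤ (ι →₀ ℤ)) :
    ∃ (b : ι →₀ ℕ) (p : AddMonoidAlgebra ℤ (ι →₀ ℕ)),
      x * polyIncl ι (AddMonoidAlgebra.single b 1) = polyIncl ι p := by
  induction x using AddMonoidAlgebra.induction_linear with
  | zero => exact ⟨0, 0, by simp⟩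
  | add x y hx hy =>
    obtain ⟨b, p, hp⟩ := hx
    obtain ⟨c, q, hq⟩ := hy
    refine ⟨b + c, p * AddMonoidAlgebra.single c 1 + q * AddMonoidAlgebra.single b 1, ?_⟩
    have h : (AddMonoidAlgebra.single (b + c) 1 : AddMonoidAlgebra ℤ (ι →₀ ℕ)) =
        AddMonoidAlgebra.single b 1 * AddMonoidAlgebra.single c 1 := by
      simp [AddMonoidAlgebra.single_mul_single]
    rw [h, map_add, map_mul, map_mul, map_mul, ← hp, ← hq]
    ring
  | single a r =>
    obtain ⟨b, c, h⟩ := exists_add_expIncl a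
    exact ⟨b, AddMonoidAlgebra.single c r, by
      simp [polyIncl_single, AddMonoidAlgebra.single_mul_single, h]⟩

/-- For a free abelian group `A = ⊕_{i ∈ ι} ℤ` (on an arbitrary set `ι` of generators), the
integral group ring `ℤ[A]` is an integral domain which is a unique factorization domain. -/
theorem groupRing_of_freeAbelian_UFD (ι : Type u) :
    ∃ _ : IsDomain (AddMonoidAlgebra ℤ (ι →₀ ℤ)),
      UniqueFactorizationMonoid (AddMonoidAlgebra ℤ (ι →₀ ℤ)) := by
  let _ : Algebra (AddMonoidAlgebra ℤ (ι →₀ ℕ)) (AddMonoidAlgebra ℤ (ι →₀ ℤ)) :=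
    (polyIncl ι).toAlgebra
  let S : Submonoid (AddMonoidAlgebra ℤ (ι →₀ ℕ)) :=
    MonoidHom.mrange (AddMonoidAlgebra.of ℤ (ι →₀ ℕ))
  have hloc : IsLocalization S (AddMonoidAlgebra ℤ (ι →₀ ℤ)) :=
    { map_units := by
        rintro ⟨_, b, rfl⟩
        refine IsUnit.of_mul_eq_one (AddMonoidAlgebra.single (-expIncl ι b.toAdd) 1) ?_
        change polyIncl ι (AddMonoidAlgebra.single b.toAdd 1) * _ = 1
        simp [polyIncl_single, AddMonoidAlgebra.single_mul_single, AddMonoidAlgebra.one_def]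
      surj := fun x => by
        obtain ⟨b, p, h⟩ := exists_mul_monomial x
        exact ⟨(p, ⟨AddMonoidAlgebra.single b 1, Multiplicative.ofAdd b, rfl⟩), h⟩
      exists_of_eq := fun {x y} h => ⟨1, by rw [polyIncl_injective ι h]⟩ }
  have hpoly : UniqueFactorizationMonoid (AddMonoidAlgebra ℤ (ι →₀ ℕ)) :=
    inferInstanceAs (UniqueFactorizationMonoid (MvPolynomial ι ℤ))
  have hufd := UniqueFactorizationMonoid.of_isLocalization S (AddMonoidAlgebra ℤ (ι →₀ ℤ))
  exact ⟨{ }, hufd⟩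
end
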